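/- arXiv:1009.1128 — 5 statements merged into one kernel-verified Lean document; each statement's English description precedes it below -/
import Mathlib

section
/- Let A be a real m × n matrix and b ∈ ℝ^m, and let k be a natural number. Suppose that every set of 2k columns of A is linearly independent. If x, y ∈ ℝ^n satisfy Ax = b, Ay = b, and both x and y have at most k nonzero entries, then x = y. -/
open Matrix Finset

/-- If every set of at most `2k` columns of `A` is linearly independent, then the
linear system `A x = b` has at most one `k`-sparse solution. -/
theorem bp_sparse_uniqueness {m n k : ℕ} (A : Matrix (Fin m) (Fin n) ℝ) (b : Fin m → ℝ)
    (hA : ∀ S : Finset (Fin n), S.card ≤ 2 * k →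
      LinearIndependent ℝ (fun i : S => Aᵀ (i : Fin n)))
    (x y : Fin n → ℝ)
    (hx : A.mulVec x = b) (hy : A.mulVec y = b)
    (hxs : (Finset.univ.filter fun i => x i ≠ 0).card ≤ k)
    (hys : (Finset.univ.filter fun i => y i ≠ 0).card ≤ k) :
    x = y := by
  classical
  set S : Finset (Fin n) := (Finset.univ.filter fun i => x i ≠ 0) ∪
    (Finset.univ.filter fun i => y i ≠ 0) with hS
  have hcard : S.card ≤ 2 * k := by
    have := Finset.card_union_le (Finset.univ.filter fun i => x i ≠ 0)
      (Finset.univ.filter fun i => y i ≠ 0)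
    rw [hS]
    omega
  have hout : ∀ i, i ∉ S → x i - y i = 0 := by
    intro i hi
    simp only [hS, Finset.mem_union, Finset.mem_filter, Finset.mem_univ, true_and, not_or,
      not_not] at hi
    rw [hi.1, hi.2, sub_zero]
  have hli := Fintype.linearIndependent_iff.mp (hA S hcard) (fun i => x i - y i) (by
    have h1 : ∑ i : S, (x i - y i) • Aᵀ (i : Fin n) = ∑ i ∈ S, (x i - y i) • Aᵀ i :=
      Finset.sum_coe_sort S (fun i => (x i - y i) • Aᵀ i)
    rw [h1, Finset.sum_subset (Finset.subset_univ S)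
      (fun i _ hi => by rw [hout i hi, zero_smul])]
    ext j
    have h2 := congrFun (hx.trans hy.symm) j
    simp only [Matrix.mulVec, dotProduct] at h2
    simp only [Finset.sum_apply, Pi.smul_apply, Matrix.transpose_apply, smul_eq_mul, sub_mul,
      Finset.sum_sub_distrib, Pi.zero_apply]
    rw [sub_eq_zero]
    simpa only [mul_comm] using h2)
  funext i
  by_cases hi : i ∈ S
  · exact sub_eq_zero.mp (hli ⟨i, hi⟩)
  · exact sub_eq_zero.mp (hout i hi)
end

section
/- Let A be a real m × n matrix and b ∈ ℝ^m such that {x ∈ ℝ^n : Ax = b} is nonempty. Then there exist x* with Ax* = b and λ* with -1 ≤ (Aᵀλ*)ᵢ ≤ 1 for all i such that ‖x*‖₁ = bᵀλ*; consequently x* minimizes ‖x‖₁ over {x : Ax = b} and λ* maximizes bᵀλ over {λ : -1 ≤ Aᵀλ ≤ 1 componentwise}, and the two optimal values coincide (strong LP duality for Basis Pursuit). -/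
open Matrix Finset

/-- Strong LP duality for Basis Pursuit: if `{x : A x = b}` is nonempty, there are a primal
feasible `x*` and a dual feasible `λ*` with `‖x*‖₁ = bᵀ λ*`; consequently `x*` is primal
optimal and `λ*` is dual optimal, and the optimal values coincide. -/
theorem basisPursuit_strong_duality {m n : ℕ} (A : Matrix (Fin m) (Fin n) ℝ) (b : Fin m → ℝ)
    (hfeas : ∃ x : Fin n → ℝ, A.mulVec x = b) :
    ∃ (xstar : Fin n → ℝ) (lamstar : Fin m → ℝ),
      A.mulVec xstar = b ∧
      (∀ i : Fin n, -1 ≤ Aᵀ.mulVec lamstar i ∧ Aᵀ.mulVec lamstar i ≤ 1) ∧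
      (∑ i, |xstar i|) = b ⬝ᵥ lamstar ∧
      (∀ x : Fin n → ℝ, A.mulVec x = b → (∑ i, |xstar i|) ≤ ∑ i, |x i|) ∧
      (∀ lam : Fin m → ℝ, (∀ i : Fin n, -1 ≤ Aᵀ.mulVec lam i ∧ Aᵀ.mulVec lam i ≤ 1) →
        b ⬝ᵥ lam ≤ b ⬝ᵥ lamstar) := by
  let L : PiLp 1 (fun _ : Fin n => ℝ) →ₗ[ℝ] (Fin m → ℝ) :=
    A.mulVecLin ∘ₗ (WithLp.linearEquiv 1 ℝ (Fin n → ℝ)).toLinearMap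
  have hL : ∀ v, L v = A.mulVec v.ofLp := fun v => rfl
  have hnorm : ∀ v : PiLp 1 (fun _ : Fin n => ℝ), ‖v‖ = ∑ i, |v i| := by
    intro v
    simp [PiLp.norm_eq_of_L1]
  have hLc : Continuous L := L.continuous_of_finiteDimensional
  -- primal minimizer
  have hS : IsClosed {v | L v = b} := isClosed_eq hLc continuous_const
  obtain ⟨x0, hx0⟩ := hfeas
  have hne : {v | L v = b}.Nonempty := ⟨WithLp.toLp 1 x0, hx0⟩
  obtain ⟨y, hy, hyd⟩ := hS.exists_infDist_eq_dist hne 0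
  have hmin : ∀ v, L v = b → ‖y‖ ≤ ‖v‖ := by
    intro v hv
    have h := Metric.infDist_le_dist_of_mem (x := 0) (show v ∈ {v | L v = b} from hv)
    rw [hyd] at h
    simpa [dist_zero_left] using h
  -- dual functional on the quotient by the kernel
  obtain ⟨g, hg1, hgy⟩ : ∃ g : Module.Dual ℝ (PiLp 1 (fun _ : Fin n => ℝ)),
      (∀ v, |g v| ≤ ‖v‖) ∧ g y = ‖y‖ ∧ g ∈ (LinearMap.ker L).dualAnnihilator := by
    have hc : IsClosed (LinearMap.ker L : Set (PiLp 1 (fun _ : Fin n => ℝ))) :=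
      isClosed_eq hLc continuous_const
    haveI := hc
    obtain ⟨f, hf1, hf2⟩ := exists_dual_vector'' ℝ ((LinearMap.ker L).mkQ y)
    refine ⟨f.toLinearMap ∘ₗ (LinearMap.ker L).mkQ, ?_, ?_, ?_⟩
    · intro v
      calc |f ((LinearMap.ker L).mkQ v)| ≤ ‖f‖ * ‖(LinearMap.ker L).mkQ v‖ := f.le_opNorm _
        _ ≤ 1 * ‖(LinearMap.ker L).mkQ v‖ := by gcongr
        _ ≤ ‖v‖ := by rw [one_mul]; exact Submodule.Quotient.norm_mk_le _ v
    · refine hf2.trans ?_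
      refine le_antisymm (Submodule.Quotient.norm_mk_le _ y) ?_
      refine le_of_forall_pos_le_add fun ε hε => ?_
      obtain ⟨w, hw, hwn⟩ := Submodule.Quotient.norm_mk_lt ((LinearMap.ker L).mkQ y) hε
      have hwy : L w = b := by
        have h1 := (Submodule.Quotient.eq _).1 hw
        rw [LinearMap.mem_ker, map_sub, sub_eq_zero] at h1
        exact h1.trans hy
      exact (hmin w hwy).trans hwn.le
    · rw [Submodule.mem_dualAnnihilator]
      intro w hw
      have h0 : (LinearMap.ker L).mkQ w = 0 := (Submodule.Quotient.mk_eq_zero _).2 hw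
      simp only [LinearMap.comp_apply, h0, map_zero]
  obtain ⟨hgy, hgk⟩ := hgy
  rw [← LinearMap.range_dualMap_eq_dualAnnihilator_ker] at hgk
  obtain ⟨φ, rfl⟩ := hgk
  have hφ : ∀ u : Fin m → ℝ, φ u = u ⬝ᵥ (fun j => φ (Pi.single j 1)) := by
    intro u
    rw [LinearMap.pi_apply_eq_sum_univ φ u]
    refine Finset.sum_congr rfl fun j _ => ?_
    rw [smul_eq_mul]
    congr 2
    ext k
    simp [Pi.single_apply, eq_comm]
  have hstrong : (∑ i, |y i|) = b ⬝ᵥ (fun j => φ (Pi.single j 1)) := by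
    rw [← hnorm, ← hgy, ← hφ]
    exact congrArg φ hy
  have hweak : ∀ (x : Fin n → ℝ) (lam : Fin m → ℝ), A.mulVec x = b →
      (∀ i : Fin n, -1 ≤ Aᵀ.mulVec lam i ∧ Aᵀ.mulVec lam i ≤ 1) →
      b ⬝ᵥ lam ≤ ∑ i, |x i| := by
    intro x lam hx hl
    have h : b ⬝ᵥ lam = x ⬝ᵥ Aᵀ.mulVec lam := by
      rw [← hx, dotProduct_comm, dotProduct_mulVec, mulVec_transpose, dotProduct_comm]
    rw [h]
    refine Finset.sum_le_sum fun i _ => ?_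
    calc x i * Aᵀ.mulVec lam i ≤ |x i| * |Aᵀ.mulVec lam i| := by
          rw [← abs_mul]; exact le_abs_self _
      _ ≤ |x i| * 1 := by gcongr; exact abs_le.2 (hl i)
      _ = |x i| := mul_one _
  refine ⟨y.ofLp, fun j => φ (Pi.single j 1), hy, ?_, hstrong, ?_, ?_⟩
  · intro i
    have h := hg1 (WithLp.toLp 1 (Pi.single i 1))
    have h2 : ‖(WithLp.toLp 1 (Pi.single i 1) : PiLp 1 (fun _ : Fin n => ℝ))‖ = 1 := by
      rw [hnorm, Finset.sum_eq_single i] <;> simp +contextual [Pi.single_apply]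
    rw [h2, LinearMap.dualMap_apply, hL, hφ] at h
    have h3 : A.mulVec (Pi.single i 1) = fun k => A k i := by
      ext k; simp
    rw [show (WithLp.toLp 1 (Pi.single i 1) : PiLp 1 (fun _ : Fin n => ℝ)).ofLp
      = Pi.single i 1 from rfl, h3] at h
    exact abs_le.1 h
  · intro x hx
    have h := hmin (WithLp.toLp 1 x) hx
    rwa [hnorm, hnorm] at h
  · intro lam hl
    rw [← hstrong]
    exact hweak _ lam hy hl
end

section
/- Let A be a real m × n matrix and b ∈ ℝ^m with {x : Ax = b} nonempty. Then there exists δ̄ > 0 such that for all δ with 0 < δ < δ̄, every minimizer of ‖x‖₁ + (δ/2)‖x‖² over {x : Ax = b} is a minimizer of ‖x‖₁ over {x : Ax = b} (exact regularization of Basis Pursuit). -/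
open Matrix Finset

/-- `x` solves the regularized problem with parameter `δ`. -/
def RegMin {m n : ℕ} (A : Matrix (Fin m) (Fin n) ℝ) (b : Fin m → ℝ) (δ : ℝ)
    (z : Fin n → ℝ) : Prop :=
  A.mulVec z = b ∧ ∀ x : Fin n → ℝ, A.mulVec x = b →
    (∑ i, |z i|) + (δ / 2) * (∑ i, (z i) ^ 2) ≤ (∑ i, |x i|) + (δ / 2) * (∑ i, (x i) ^ 2)

/-- First-order condition along directions that keep the support. -/
lemma RegMin.first_order {m n : ℕ} {A : Matrix (Fin m) (Fin n) ℝ} {b : Fin m → ℝ} {δ : ℝ}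
    {z : Fin n → ℝ} (h : RegMin A b δ z) (d : Fin n → ℝ) (hd : A.mulVec d = 0)
    (hs : ∀ i, z i = 0 → d i = 0) :
    (∑ i, (SignType.sign (z i) : ℝ) * d i) + δ * ∑ i, z i * d i = 0 := by
  have hlin : ∀ i, HasDerivAt (fun t : ℝ => z i + t * d i) (d i) 0 := by
    intro i
    simpa using ((hasDerivAt_id (0 : ℝ)).mul_const (d i)).const_add (z i)
  have habs : ∀ i, HasDerivAt (fun t : ℝ => |z i + t * d i|)
      ((SignType.sign (z i) : ℝ) * d i) 0 := by
    intro i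
    by_cases hz : z i = 0
    · have := hs i hz
      simp only [hz, this, mul_zero, add_zero]
      exact hasDerivAt_const _ _
    · have h1 : HasDerivAt (fun y : ℝ => |y|) (SignType.sign (z i) : ℝ) (z i + 0 * d i) := by
        simpa using hasDerivAt_abs hz
      exact h1.comp (0 : ℝ) (hlin i)
  have hsq : ∀ i, HasDerivAt (fun t : ℝ => (z i + t * d i) ^ 2) (2 * (z i * d i)) 0 := by
    intro i
    have h1 := (hlin i).fun_pow 2
    have h2 : ((2 : ℕ) : ℝ) * (z i + 0 * d i) ^ (2 - 1) * d i = 2 * (z i * d i) := by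
      norm_num
      ring
    rw [h2] at h1
    exact h1
  have hder : HasDerivAt (fun t : ℝ => (∑ i, |z i + t * d i|)
      + (δ / 2) * ∑ i, (z i + t * d i) ^ 2)
      ((∑ i, (SignType.sign (z i) : ℝ) * d i) + (δ / 2) * ∑ i, 2 * (z i * d i)) 0 :=
    (HasDerivAt.fun_sum fun i _ => habs i).add
      ((HasDerivAt.fun_sum fun i _ => hsq i).const_mul (δ / 2))
  have hmin : IsLocalMin (fun t : ℝ => (∑ i, |z i + t * d i|)
      + (δ / 2) * ∑ i, (z i + t * d i) ^ 2) 0 := by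
    refine Filter.Eventually.of_forall fun t => ?_
    have := h.2 (z + t • d) (by rw [Matrix.mulVec_add, Matrix.mulVec_smul, hd, h.1]; simp)
    simpa using this
  have h0 := hmin.hasDerivAt_eq_zero hder
  rw [← Finset.mul_sum] at h0
  linarith

lemma RegMin.bound {m n : ℕ} {A : Matrix (Fin m) (Fin n) ℝ} {b : Fin m → ℝ} {δ : ℝ}
    {z : Fin n → ℝ} (h : RegMin A b δ z) (hδ : 0 < δ) (hδ1 : δ < 1)
    {x : Fin n → ℝ} (hx : A.mulVec x = b) (i : Fin n) :
    |z i| ≤ (∑ i, |x i|) + ∑ i, (x i) ^ 2 := by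
  have h1 := h.2 x hx
  have h2 : |z i| ≤ ∑ i, |z i| :=
    Finset.single_le_sum (f := fun i => |z i|) (fun i _ => abs_nonneg _) (Finset.mem_univ i)
  have h3 : 0 ≤ ∑ i, (z i) ^ 2 := Finset.sum_nonneg fun i _ => sq_nonneg _
  have h4 : 0 ≤ ∑ i, (x i) ^ 2 := Finset.sum_nonneg fun i _ => sq_nonneg _
  nlinarith

/-- The claim restricted to one sign pattern. -/
lemma exact_on_pattern {m n : ℕ} (A : Matrix (Fin m) (Fin n) ℝ)
    (b : Fin m → ℝ) (hfeas : ∃ x : Fin n → ℝ, A.mulVec x = b) (s : Fin n → SignType) :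
    ∃ ε : ℝ, 0 < ε ∧ ∀ δ : ℝ, 0 < δ → δ < ε → ∀ z : Fin n → ℝ, RegMin A b δ z →
      (∀ i, SignType.sign (z i) = s i) →
      ∀ x : Fin n → ℝ, A.mulVec x = b → (∑ i, |z i|) ≤ ∑ i, |x i| := by
  by_contra! hcon
  obtain ⟨x0, hx0⟩ := hfeas
  obtain ⟨δ1, hδ1, -, z1, hz1, hs1, y, hy, hlt⟩ := hcon 1 one_pos
  set R := (∑ i, |x0 i|) + ∑ i, (x0 i) ^ 2 with hR
  have hR0 : 0 ≤ R := add_nonneg (Finset.sum_nonneg fun i _ => abs_nonneg _)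
    (Finset.sum_nonneg fun i _ => sq_nonneg _)
  have hzero : ∀ z : Fin n → ℝ, (∀ i, SignType.sign (z i) = s i) → ∀ i, z i = 0 ↔ s i = 0 := by
    intro z hz i
    rw [← hz i, sign_eq_zero_iff]
  -- the linear part vanishes on all admissible directions
  have hsd : ∀ d : Fin n → ℝ, A.mulVec d = 0 → (∀ i, s i = 0 → d i = 0) →
      ∑ i, (s i : ℝ) * d i = 0 := by
    intro d hd hds
    have hD : 0 ≤ ∑ i, |d i| := Finset.sum_nonneg fun i _ => abs_nonneg _
    have key : ∀ ε : ℝ, 0 < ε → |∑ i, (s i : ℝ) * d i| ≤ ε * (R * ∑ i, |d i|) := by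
      intro ε hε
      obtain ⟨δ, hδ, hδε, z, hz, hsz, -⟩ := hcon (min ε 1) (lt_min hε one_pos)
      have h1 := hz.first_order d hd fun i hi => hds i ((hzero z hsz i).1 hi)
      simp only [hsz] at h1
      have h2 : |∑ i, z i * d i| ≤ R * ∑ i, |d i| := by
        refine (Finset.abs_sum_le_sum_abs _ _).trans ?_
        rw [Finset.mul_sum]
        refine Finset.sum_le_sum fun i _ => ?_
        rw [abs_mul]
        exact mul_le_mul_of_nonneg_right
          (hz.bound hδ (hδε.trans_le (min_le_right _ _)) hx0 i) (abs_nonneg _)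
      have h3 : ∑ i, (s i : ℝ) * d i = -(δ * ∑ i, z i * d i) := by linarith
      rw [h3, abs_neg, abs_mul, abs_of_pos hδ]
      exact mul_le_mul (hδε.le.trans (min_le_left _ _)) h2 (abs_nonneg _) hε.le
    rw [← abs_nonpos_iff]
    by_contra! hpos
    have hC : 0 ≤ R * ∑ i, |d i| := mul_nonneg hR0 hD
    have h4 := key (|∑ i, (s i : ℝ) * d i| / (2 * (R * ∑ i, |d i| + 1))) (by positivity)
    have hC1 : 0 < 2 * (R * (∑ i, |d i|) + 1) := by positivity
    rw [div_mul_eq_mul_div, le_div_iff₀ hC1] at h4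
    nlinarith
  have horth : ∀ δ z, 0 < δ → RegMin A b δ z → (∀ i, SignType.sign (z i) = s i) →
      ∀ d : Fin n → ℝ, A.mulVec d = 0 → (∀ i, s i = 0 → d i = 0) →
      ∑ i, z i * d i = 0 := by
    intro δ z hδ hz hsz d hd hds
    have h1 := hz.first_order d hd fun i hi => hds i ((hzero z hsz i).1 hi)
    simp only [hsz] at h1
    rw [hsd d hd hds, zero_add] at h1
    exact (mul_eq_zero.1 h1).resolve_left hδ.ne'
  have huniq : ∀ δ z, 0 < δ → RegMin A b δ z → (∀ i, SignType.sign (z i) = s i) → z = z1 := by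
    intro δ z hδ hz hsz
    have hd : A.mulVec (z - z1) = 0 := by rw [Matrix.mulVec_sub, hz.1, hz1.1, sub_self]
    have hds : ∀ i, s i = 0 → (z - z1) i = 0 := by
      intro i hi
      simp [(hzero z hsz i).2 hi, (hzero z1 hs1 i).2 hi]
    have h1 := horth δ z hδ hz hsz _ hd hds
    have h2 := horth δ1 z1 hδ1 hz1 hs1 _ hd hds
    have h3 : ∑ i, ((z - z1) i) ^ 2 = 0 := by
      rw [← sub_zero (0 : ℝ)]
      nth_rewrite 1 [← h1]
      rw [← h2, ← Finset.sum_sub_distrib]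
      refine Finset.sum_congr rfl fun i _ => ?_
      simp only [Pi.sub_apply]
      ring
    rw [Finset.sum_eq_zero_iff_of_nonneg fun i _ => sq_nonneg _] at h3
    funext i
    have := pow_eq_zero_iff (two_ne_zero) |>.1 (h3 i (Finset.mem_univ i))
    simpa [sub_eq_zero] using this
  have hY : 0 ≤ ∑ i, (y i) ^ 2 := Finset.sum_nonneg fun i _ => sq_nonneg _
  have hY1 : 0 < (∑ i, (y i) ^ 2) + 1 := by linarith
  obtain ⟨δ, hδ, hδε, z, hz, hsz, -⟩ :=
    hcon (((∑ i, |z1 i|) - ∑ i, |y i|) / ((∑ i, (y i) ^ 2) + 1))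
      (div_pos (by linarith) hY1)
  have hzz := huniq δ z hδ hz hsz
  subst hzz
  have h5 := hz.2 y hy
  rw [lt_div_iff₀ hY1] at hδε
  have h6 : 0 ≤ ∑ i, (z i) ^ 2 := Finset.sum_nonneg fun i _ => sq_nonneg _
  nlinarith [mul_nonneg hδ.le hY, mul_nonneg hδ.le h6]

/-- Exact regularization of Basis Pursuit: there is `δ̄ > 0` such that for every
`0 < δ < δ̄`, any minimizer of `‖x‖₁ + (δ/2)‖x‖²` over `{x : A x = b}` is a minimizer
of `‖x‖₁` over `{x : A x = b}`. -/
theorem basisPursuit_exact_regularization {m n : ℕ} (A : Matrix (Fin m) (Fin n) ℝ)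
    (b : Fin m → ℝ) (hfeas : ∃ x : Fin n → ℝ, A.mulVec x = b) :
    ∃ δbar : ℝ, 0 < δbar ∧ ∀ δ : ℝ, 0 < δ → δ < δbar →
      ∀ xstar : Fin n → ℝ,
        (A.mulVec xstar = b ∧
          ∀ x : Fin n → ℝ, A.mulVec x = b →
            (∑ i, |xstar i|) + (δ / 2) * (∑ i, (xstar i) ^ 2)
              ≤ (∑ i, |x i|) + (δ / 2) * (∑ i, (x i) ^ 2)) →
        ∀ x : Fin n → ℝ, A.mulVec x = b → (∑ i, |xstar i|) ≤ ∑ i, |x i| := by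
  choose ε hε h using exact_on_pattern A b hfeas
  obtain ⟨s0, -, hs0⟩ := Finset.exists_min_image Finset.univ ε Finset.univ_nonempty
  refine ⟨ε s0, hε s0, fun δ hδ hlt z hz => ?_⟩
  exact h (fun i => SignType.sign (z i)) δ hδ (hlt.trans_le (hs0 _ (Finset.mem_univ _))) z hz
    fun i => rfl
end

section
/- Let A be a real m × n matrix, b ∈ ℝ^m, and δ > 0. For y ∈ ℝ^m let x(y) denote the unique minimizer over x ∈ ℝ^n of ‖x‖₁ + (Aᵀy)ᵀx + (δ/2)‖x‖², and define the dual function L(y) = -bᵀy + inf_x (‖x‖₁ + (Aᵀy)ᵀx + (δ/2)‖x‖²). If y* maximizes L over ℝ^m, then A x(y*) = b and x(y*) minimizes ‖x‖₁ + (δ/2)‖x‖² over {x : Ax = b}. -/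
open Matrix Finset

/-- Recovering the regularized Basis Pursuit solution from a dual maximizer: if `y*`
maximizes the dual function `L(y) = -bᵀy + inf_x (‖x‖₁ + (Aᵀy)ᵀx + (δ/2)‖x‖²)` and
`x*` minimizes the inner problem at `y*`, then `A x* = b` and `x*` minimizes
`‖x‖₁ + (δ/2)‖x‖²` over `{x : A x = b}`. -/
theorem dual_maximizer_recovers_primal {m n : ℕ} (A : Matrix (Fin m) (Fin n) ℝ)
    (b : Fin m → ℝ) (δ : ℝ) (hδ : 0 < δ)
    (f : (Fin m → ℝ) → (Fin n → ℝ) → ℝ)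
    (hf : ∀ y x, f y x =
      (∑ i, |x i|) + (Aᵀ.mulVec y) ⬝ᵥ x + (δ / 2) * (∑ i, (x i) ^ 2))
    (L : (Fin m → ℝ) → ℝ)
    (hL : ∀ y, L y = -(b ⬝ᵥ y) + ⨅ x : Fin n → ℝ, f y x)
    (ystar : Fin m → ℝ) (hystar : ∀ y : Fin m → ℝ, L y ≤ L ystar)
    (xstar : Fin n → ℝ) (hxstar : ∀ x : Fin n → ℝ, f ystar xstar ≤ f ystar x) :
    A.mulVec xstar = b ∧
      ∀ x : Fin n → ℝ, A.mulVec x = b →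
        (∑ i, |xstar i|) + (δ / 2) * (∑ i, (xstar i) ^ 2)
          ≤ (∑ i, |x i|) + (δ / 2) * (∑ i, (x i) ^ 2) := by
  classical
  have hgrow : ∀ x : Fin n → ℝ,
      f ystar xstar + (δ / 4) * ∑ i, (x i - xstar i) ^ 2 ≤ f ystar x := by
    intro x
    have h := hxstar (fun i => (x i + xstar i) / 2)
    rw [hf, hf] at h
    rw [hf, hf]
    set g := Aᵀ.mulVec ystar
    have key : (∑ i, |(x i + xstar i) / 2|)
        + (g ⬝ᵥ (fun i => (x i + xstar i) / 2))
        + (δ / 2) * (∑ i, ((x i + xstar i) / 2) ^ 2)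
        ≤ (((∑ i, |x i|) + g ⬝ᵥ x + (δ / 2) * (∑ i, (x i) ^ 2))
          + ((∑ i, |xstar i|) + g ⬝ᵥ xstar + (δ / 2) * (∑ i, (xstar i) ^ 2))) / 2
          - (δ / 8) * ∑ i, (x i - xstar i) ^ 2 := by
      simp only [dotProduct, Finset.mul_sum, ← Finset.sum_add_distrib, Finset.sum_div,
        ← Finset.sum_sub_distrib]
      refine Finset.sum_le_sum fun i _ => ?_
      have h1 : |(x i + xstar i) / 2| ≤ (|x i| + |xstar i|) / 2 := by
        rw [abs_div, abs_two]
        have := abs_add_le (x i) (xstar i)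
        linarith
      nlinarith [h1]
    linarith
  have hinf : ⨅ x : Fin n → ℝ, f ystar x = f ystar xstar :=
    le_antisymm (ciInf_le ⟨f ystar xstar, by rintro _ ⟨x, rfl⟩; exact hxstar x⟩ xstar)
      (le_ciInf hxstar)
  have hAx : A.mulVec xstar = b := by
    set r : Fin m → ℝ := A.mulVec xstar - b with hr
    set g : Fin n → ℝ := Aᵀ.mulVec r with hg
    set G : ℝ := ∑ i, g i ^ 2 with hG
    have hG0 : 0 ≤ G := Finset.sum_nonneg fun i _ => sq_nonneg _
    have hgx : g ⬝ᵥ xstar = r ⬝ᵥ A.mulVec xstar := by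
      rw [hg, Matrix.mulVec_transpose, Matrix.dotProduct_mulVec]
    have hlow : ∀ t : ℝ, t * (r ⬝ᵥ r) ≤ t ^ 2 * G / δ := by
      intro t
      have hy := hystar (ystar + t • r)
      rw [hL, hL, hinf] at hy
      have hb : f ystar xstar + t * (g ⬝ᵥ xstar) - t ^ 2 * G / δ
          ≤ ⨅ x : Fin n → ℝ, f (ystar + t • r) x := by
        refine le_ciInf fun x => ?_
        have h1 : f (ystar + t • r) x = f ystar x + t * (g ⬝ᵥ x) := by
          rw [hf, hf, Matrix.mulVec_add, Matrix.mulVec_smul, add_dotProduct, smul_dotProduct,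
            smul_eq_mul]
          ring
        have h2 := hgrow x
        have h3 : 0 ≤ (δ / 4) * ∑ i, (x i - xstar i) ^ 2 + (t * (g ⬝ᵥ x) - t * (g ⬝ᵥ xstar))
            + t ^ 2 / δ * G := by
          simp only [dotProduct, hG, Finset.mul_sum, ← Finset.sum_add_distrib,
            ← Finset.sum_sub_distrib]
          refine Finset.sum_nonneg fun i _ => ?_
          have : δ / 4 * (x i - xstar i) ^ 2 + (t * (g i * x i) - t * (g i * xstar i))
              + t ^ 2 / δ * g i ^ 2 = (δ / 2 * (x i - xstar i) + t * g i) ^ 2 / δ := by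
            field_simp
            ring
          rw [this]
          positivity
        have h4 : t ^ 2 / δ * G = t ^ 2 * G / δ := by ring
        linarith
      rw [dotProduct_add, dotProduct_smul, smul_eq_mul] at hy
      have hrr : r ⬝ᵥ r = g ⬝ᵥ xstar - b ⬝ᵥ r := by
        rw [hgx, dotProduct_comm b r, ← dotProduct_sub]
      rw [hrr, mul_sub]
      linarith
    have hR0 : 0 ≤ r ⬝ᵥ r := Finset.sum_nonneg fun i _ => mul_self_nonneg _
    have hR : r ⬝ᵥ r = 0 := by
      by_contra hne
      have hpos : 0 < r ⬝ᵥ r := lt_of_le_of_ne hR0 (Ne.symm hne)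
      have hGd : 0 < G + δ := by linarith
      have h := hlow ((r ⬝ᵥ r) * δ / (G + δ))
      have e : ((r ⬝ᵥ r) * δ / (G + δ)) ^ 2 * G / δ
          = (r ⬝ᵥ r) * δ / (G + δ) * ((r ⬝ᵥ r) * G / (G + δ)) := by
        field_simp
      rw [e] at h
      have h5 := le_of_mul_le_mul_left h (by positivity)
      rw [le_div_iff₀ hGd] at h5
      nlinarith [mul_pos hpos hδ]
    have hr0 : r = 0 := dotProduct_self_eq_zero.mp hR
    exact sub_eq_zero.mp hr0
  refine ⟨hAx, fun x hx => ?_⟩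
  have h := hxstar x
  rw [hf, hf] at h
  have e : ∀ z, Aᵀ.mulVec ystar ⬝ᵥ z = ystar ⬝ᵥ A.mulVec z := fun z => by
    rw [Matrix.mulVec_transpose, Matrix.dotProduct_mulVec]
  rw [e, e, hx, hAx] at h
  linarith
end

section
/- Let A be a real m × n matrix, b ∈ ℝ^m, v ∈ ℝ^n, and c > 0 with {x : Ax = b} nonempty. For λ ∈ ℝ^m let x(λ) ∈ ℝ^n be the unique coordinatewise minimizer of xᵢ ↦ |xᵢ| + (v - Aᵀλ)ᵢ xᵢ + c xᵢ². If λ* maximizes the dual objective λ ↦ λᵀb + Σᵢ inf_{t} (|t| + (v - Aᵀλ)ᵢ t + c t²) over ℝ^m, then A x(λ*) = b and x(λ*) is the unique minimizer of ‖x‖₁ + vᵀx + c‖x‖² over {x : Ax = b}. -/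
open Matrix Finset

lemma soft_key (c u s t : ℝ) (hc : 0 < c)
    (hs : s = if u < -1 then -(u + 1) / (2 * c) else if 1 < u then -(u - 1) / (2 * c) else 0) :
    |s| + u * s + c * s ^ 2 + c * (t - s) ^ 2 ≤ |t| + u * t + c * t ^ 2 := by
  have h1 := le_abs_self t
  have h2 := neg_abs_le t
  split_ifs at hs with ha hb
  · have e : 2 * c * s = -(u + 1) := by rw [hs]; field_simp
    have hs0 : 0 < s := by rw [hs]; apply div_pos <;> linarith
    rw [abs_of_pos hs0]
    have e1 : 2 * c * s * s = -(u + 1) * s := by rw [e]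
    have e2 : 2 * c * s * t = -(u + 1) * t := by rw [e]
    nlinarith
  · have e : 2 * c * s = -(u - 1) := by rw [hs]; field_simp
    have hs0 : s < 0 := by rw [hs]; apply div_neg_of_neg_of_pos <;> linarith
    rw [abs_of_neg hs0]
    have e1 : 2 * c * s * s = -(u - 1) * s := by rw [e]
    have e2 : 2 * c * s * t = -(u - 1) * t := by rw [e]
    nlinarith
  · subst hs
    have : |u * t| ≤ 1 * |t| := by
      rw [abs_mul]
      exact mul_le_mul_of_nonneg_right (abs_le.2 ⟨by linarith, by linarith⟩) (abs_nonneg t)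
    have h3 := neg_abs_le (u * t)
    simp
    nlinarith

lemma soft_pert (c u u' s t : ℝ) (hc : 0 < c)
    (hs : s = if u < -1 then -(u + 1) / (2 * c) else if 1 < u then -(u - 1) / (2 * c) else 0) :
    |s| + u * s + c * s ^ 2 + (u' - u) * s - (u' - u) ^ 2 * (1 / (4 * c))
      ≤ |t| + u' * t + c * t ^ 2 := by
  have h := soft_key c u s t hc hs
  have h2 : 0 ≤ c * ((t - s) + (u' - u) / (2 * c)) ^ 2 := by positivity
  have h3 : c * ((t - s) + (u' - u) / (2 * c)) ^ 2
      = c * (t - s) ^ 2 + (u' - u) * (t - s) + (u' - u) ^ 2 * (1 / (4 * c)) := by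
    field_simp
    ring
  nlinarith

/-- Recovering the per-node primal solution from a dual maximizer: if `λ*` maximizes the
dual objective `λ ↦ λᵀb + Σᵢ inf_t (|t| + (v - Aᵀλ)ᵢ t + c t²)`, then the coordinatewise
soft-thresholding point `x(λ*)` is feasible (`A x(λ*) = b`) and is the unique minimizer
of `‖x‖₁ + vᵀx + c‖x‖²` over `{x : A x = b}`. -/
theorem perNode_dual_maximizer_recovers_primal {m n : ℕ} (A : Matrix (Fin m) (Fin n) ℝ)
    (b : Fin m → ℝ) (v : Fin n → ℝ) (c : ℝ) (hc : 0 < c)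
    (hfeas : ∃ x : Fin n → ℝ, A.mulVec x = b)
    (u : (Fin m → ℝ) → Fin n → ℝ) (hu : ∀ lam, u lam = v - Aᵀ.mulVec lam)
    (x : (Fin m → ℝ) → Fin n → ℝ)
    (hx : ∀ lam i, x lam i =
      if u lam i < -1 then -(u lam i + 1) / (2 * c)
      else if 1 < u lam i then -(u lam i - 1) / (2 * c) else 0)
    (D : (Fin m → ℝ) → ℝ)
    (hD : ∀ lam, D lam = lam ⬝ᵥ b + ∑ i, ⨅ t : ℝ, (|t| + u lam i * t + c * t ^ 2))
    (lamstar : Fin m → ℝ) (hlamstar : ∀ lam : Fin m → ℝ, D lam ≤ D lamstar) :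
    A.mulVec (x lamstar) = b ∧
    (∀ z : Fin n → ℝ, A.mulVec z = b →
      (∑ i, |x lamstar i|) + v ⬝ᵥ x lamstar + c * (∑ i, (x lamstar i) ^ 2)
        ≤ (∑ i, |z i|) + v ⬝ᵥ z + c * (∑ i, (z i) ^ 2)) ∧
    (∀ z : Fin n → ℝ,
      (A.mulVec z = b ∧ ∀ w : Fin n → ℝ, A.mulVec w = b →
        (∑ i, |z i|) + v ⬝ᵥ z + c * (∑ i, (z i) ^ 2)
          ≤ (∑ i, |w i|) + v ⬝ᵥ w + c * (∑ i, (w i) ^ 2)) →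
      z = x lamstar) := by
  have hfe : A.mulVec (x lamstar) = b := by
    set g : Fin m → ℝ := b - A.mulVec (x lamstar) with hg
    set K : ℝ := (∑ i, (Aᵀ.mulVec g) i ^ 2) * (1 / (4 * c)) with hK
    have hKn : 0 ≤ K := by positivity
    have main : ∀ ε : ℝ, ε * (g ⬝ᵥ g) ≤ ε ^ 2 * K := by
      intro ε
      have hm := hlamstar (lamstar + ε • g)
      rw [hD, hD] at hm
      have hu' : ∀ i, u (lamstar + ε • g) i - u lamstar i = -(ε * (Aᵀ.mulVec g) i) := by
        intro i
        rw [hu, hu]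
        simp [Matrix.mulVec_add, Matrix.mulVec_smul]
      have hup : ∑ i, (⨅ t : ℝ, (|t| + u lamstar i * t + c * t ^ 2))
          ≤ ∑ i, (|x lamstar i| + u lamstar i * x lamstar i + c * x lamstar i ^ 2) := by
        apply Finset.sum_le_sum
        intro i _
        refine ciInf_le ⟨|x lamstar i| + u lamstar i * x lamstar i + c * x lamstar i ^ 2, ?_⟩
          (x lamstar i)
        rintro _ ⟨t, rfl⟩
        have := soft_key c _ _ t hc (hx lamstar i)
        have h0 : 0 ≤ c * (t - x lamstar i) ^ 2 := by positivity
        simp only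
        linarith
      have hlo : ∑ i, ((|x lamstar i| + u lamstar i * x lamstar i + c * x lamstar i ^ 2)
            - ε * ((Aᵀ.mulVec g) i * x lamstar i)
            - ε ^ 2 * ((Aᵀ.mulVec g) i ^ 2 * (1 / (4 * c))))
          ≤ ∑ i, (⨅ t : ℝ, (|t| + u (lamstar + ε • g) i * t + c * t ^ 2)) := by
        apply Finset.sum_le_sum
        intro i _
        refine le_ciInf fun t => ?_
        have := soft_pert c _ (u (lamstar + ε • g) i) _ t hc (hx lamstar i)
        rw [hu'] at this
        refine le_trans (le_of_eq ?_) this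
        ring
      rw [Finset.sum_sub_distrib, Finset.sum_sub_distrib, ← Finset.mul_sum, ← Finset.mul_sum,
        ← Finset.sum_mul, ← hK] at hlo
      have hdot : ∑ i, (Aᵀ.mulVec g) i * x lamstar i = g ⬝ᵥ A.mulVec (x lamstar) := by
        rw [Matrix.dotProduct_mulVec, ← Matrix.mulVec_transpose]
        rfl
      rw [hdot] at hlo
      have hgg : g ⬝ᵥ g = g ⬝ᵥ b - g ⬝ᵥ A.mulVec (x lamstar) := by
        rw [← dotProduct_sub]
      rw [add_dotProduct, smul_dotProduct, smul_eq_mul] at hm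
      rw [hgg]
      linarith
    have hg0 : g ⬝ᵥ g = 0 := by
      have hnn : 0 ≤ g ⬝ᵥ g := by
        simp only [dotProduct]
        exact Finset.sum_nonneg fun i _ => mul_self_nonneg _
      by_contra hne
      have hpos : 0 < g ⬝ᵥ g := lt_of_le_of_ne hnn (Ne.symm hne)
      have h := main ((g ⬝ᵥ g) / (K + 1))
      have hk1 : 0 < K + 1 := by linarith
      set G := g ⬝ᵥ g
      have hq : 0 < G / (K + 1) := div_pos hpos hk1
      have hG : G = (G / (K + 1)) * (K + 1) := by field_simp
      have : G ≤ (G / (K + 1)) * K := by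
        refine le_of_mul_le_mul_left ?_ hq
        calc _ ≤ _ := h
          _ = _ := by ring
      linarith
    have := dotProduct_self_eq_zero.1 hg0
    exact (sub_eq_zero.1 this).symm
  have hobj : ∀ z : Fin n → ℝ, A.mulVec z = b →
      (∑ i, |z i|) + v ⬝ᵥ z + c * (∑ i, (z i) ^ 2)
        = ∑ i, (|z i| + u lamstar i * z i + c * z i ^ 2) + lamstar ⬝ᵥ b := by
    intro z hz
    have h1 : v ⬝ᵥ z = ∑ i, u lamstar i * z i + lamstar ⬝ᵥ b := by
      rw [← hz, Matrix.dotProduct_mulVec, ← Matrix.mulVec_transpose, hu]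
      change v ⬝ᵥ z = (v - Aᵀ.mulVec lamstar) ⬝ᵥ z + _
      rw [sub_dotProduct]
      ring
    rw [h1, Finset.sum_add_distrib, Finset.sum_add_distrib, Finset.mul_sum]
    ring
  have hstrong : ∀ z : Fin n → ℝ, A.mulVec z = b →
      (∑ i, |x lamstar i|) + v ⬝ᵥ x lamstar + c * (∑ i, (x lamstar i) ^ 2)
        + ∑ i, c * (z i - x lamstar i) ^ 2
        ≤ (∑ i, |z i|) + v ⬝ᵥ z + c * (∑ i, (z i) ^ 2) := by
    intro z hz
    rw [hobj z hz, hobj _ hfe]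
    have := Finset.sum_le_sum fun i (_ : i ∈ Finset.univ) =>
      soft_key c _ _ (z i) hc (hx lamstar i)
    rw [Finset.sum_add_distrib] at this
    linarith
  have hnn : ∀ z : Fin n → ℝ, ∀ i ∈ Finset.univ, 0 ≤ c * (z i - x lamstar i) ^ 2 := by
    intro z i _
    positivity
  refine ⟨hfe, fun z hz => ?_, fun z hz => ?_⟩
  · have h1 := hstrong z hz
    have h2 := Finset.sum_nonneg (hnn z)
    linarith
  · have h1 := hstrong z hz.1
    have h2 := Finset.sum_nonneg (hnn z)
    have h3 := hz.2 _ hfe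
    have h4 : ∑ i, c * (z i - x lamstar i) ^ 2 = 0 := by linarith
    funext i
    have h5 := (Finset.sum_eq_zero_iff_of_nonneg (hnn z)).1 h4 i (Finset.mem_univ i)
    have h6 : (z i - x lamstar i) ^ 2 = 0 := by
      rcases mul_eq_zero.1 h5 with h | h
      · linarith
      · exact h
    exact sub_eq_zero.1 (pow_eq_zero_iff (two_ne_zero)|>.1 h6)
end
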